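/- arXiv:2208.00851 — 7 statements merged into one kernel-verified Lean document; each statement's English description precedes it below -/
import Mathlib

section
/- For every real x with x = qπ for some integer q, L_Ω(x) = 1; and for every real x not of the form qπ (q ∈ ℤ), L_Ω(x) = |sin(Kx)/sin(x)| / K. -/
open Real

/-- The loss function `L_Ω(x) = −(1/K)·inf_{y ∈ [0,2π)} Σ_{k=0}^{K−1} cos(y − 2xk)`. -/
noncomputable def lossOmega (K : ℕ) (x : ℝ) : ℝ :=
  -(1 / (K : ℝ)) *
    sInf ((fun y => ∑ k ∈ Finset.range K, Real.cos (y - 2 * x * k)) '' Set.Ico 0 (2 * π))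

theorem aux_sum (x y : ℝ) (n : ℕ) :
    Real.sin x * ∑ k ∈ Finset.range n, Real.cos (y - 2 * x * k)
      = Real.sin (n * x) * Real.cos (y - (n - 1) * x) := by
  induction n with
  | zero => simp
  | succ n ih =>
    rw [Finset.sum_range_succ, mul_add, ih]
    have h1 : y - ((n:ℝ) - 1) * x = (y - n * x) + x := by ring
    have h2 : y - 2 * x * n = (y - n * x) - n * x := by ring
    have h3 : ((n + 1 : ℕ) : ℝ) * x = n * x + x := by push_cast; ring
    have h4 : y - (((n + 1 : ℕ) : ℝ) - 1) * x = y - n * x := by push_cast; ring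
    rw [h1, h2, h3, h4, Real.cos_add, Real.cos_sub (y - n * x), Real.sin_add]
    ring

theorem aux_inf (f : ℝ → ℝ) (A c : ℝ) (h : ∀ y, f y = A * Real.cos (y - c)) :
    sInf (f '' Set.Ico 0 (2 * π)) = -|A| := by
  apply IsLeast.csInf_eq
  constructor
  · have key : ∀ d : ℝ, A * Real.cos (d - c) = -|A| →
        -|A| ∈ f '' Set.Ico 0 (2 * π) := by
      intro d hd
      refine ⟨toIcoMod Real.two_pi_pos 0 d, ?_, ?_⟩
      · have := toIcoMod_mem_Ico Real.two_pi_pos 0 d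
        simpa using this
      · rw [h, ← hd, toIcoMod, zsmul_eq_mul, sub_right_comm, Real.cos_sub_int_mul_two_pi]
    rcases le_total 0 A with hA | hA
    · apply key (c + π)
      simp [abs_of_nonneg hA]
    · apply key c
      simp [abs_of_nonpos hA]
  · rintro _ ⟨y, -, rfl⟩
    rw [h]
    have h1 : |A * Real.cos (y - c)| ≤ |A| := by
      rw [abs_mul]
      exact mul_le_of_le_one_right (abs_nonneg _) (Real.abs_cos_le_one _)
    exact (abs_le.mp h1).1

theorem stmt_0 (K : ℕ) (hK : 2 ≤ K) (x : ℝ) :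
    ((∃ q : ℤ, x = q * π) → lossOmega K x = 1) ∧
    ((¬ ∃ q : ℤ, x = q * π) →
      lossOmega K x = |Real.sin (K * x) / Real.sin x| / K) := by
  have hK0 : (K : ℝ) ≠ 0 := by
    have : K ≠ 0 := by omega
    exact_mod_cast this
  constructor
  · rintro ⟨q, rfl⟩
    unfold lossOmega
    rw [aux_inf _ (K : ℝ) 0]
    · rw [abs_of_nonneg (Nat.cast_nonneg K)]
      field_simp
    · intro y
      have : ∀ k ∈ Finset.range K, Real.cos (y - 2 * (q * π) * k) = Real.cos y := by
        intro k _
        have e : y - 2 * (q * π) * k = y - ((q * k : ℤ) : ℝ) * (2 * π) := by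
          push_cast; ring
        rw [e, Real.cos_sub_int_mul_two_pi]
      rw [Finset.sum_congr rfl this]
      simp
  · intro hx
    have hs : Real.sin x ≠ 0 := by
      intro h0
      obtain ⟨n, hn⟩ := Real.sin_eq_zero_iff.mp h0
      exact hx ⟨n, hn.symm⟩
    unfold lossOmega
    rw [aux_inf _ (Real.sin (K * x) / Real.sin x) ((K - 1) * x)]
    · ring
    · intro y
      have := aux_sum x y K
      rw [div_mul_eq_mul_div, eq_div_iff hs, ← this, mul_comm]
end

section
/- For every real x in the interval [π/K, (K−1)π/K], the loss function satisfies L_Ω(x) ≤ 1/(K·sin(π/K)). -/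
open Real

theorem tele_aux (K : ℕ) (x y : ℝ) :
    2 * Real.sin x * ∑ k ∈ Finset.range K, Real.cos (y - 2 * x * k)
      = Real.sin (y + x) - Real.sin (y + x - 2 * x * K) := by
  induction K with
  | zero => simp
  | succ n ih =>
    rw [Finset.sum_range_succ, mul_add, ih]
    have h1 : y + x - 2 * x * n = (y - 2 * x * n) + x := by ring
    have h2 : y + x - 2 * x * ((n + 1 : ℕ) : ℝ) = (y - 2 * x * n) - x := by push_cast; ring
    rw [h1, h2, Real.sin_add (y - 2 * x * n) x, Real.sin_sub (y - 2 * x * n) x]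
    ring

theorem stmt_3 (K : ℕ) (hK : 2 ≤ K) :
    ∀ x ∈ Set.Icc (π / K) (((K : ℝ) - 1) * π / K),
      lossOmega K x ≤ 1 / (K * Real.sin (π / K)) := by
  rintro x ⟨hx1, hx2⟩
  have hK2 : (2 : ℝ) ≤ K := by exact_mod_cast hK
  have hK0 : (0 : ℝ) < K := by linarith
  have hpi := Real.pi_pos
  have ha : 0 < π / K := by positivity
  have hx3 : x ≤ π - π / K := by
    have : ((K : ℝ) - 1) * π / K = π - π / K := by field_simp
    linarith
  have hs : 0 < Real.sin (π / K) := Real.sin_pos_of_pos_of_lt_pi ha (by linarith)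
  have hsx : Real.sin (π / K) ≤ Real.sin x := by
    have h := Real.sin_sub_sin x (π / K)
    have h1 : 0 ≤ Real.sin ((x - π / K) / 2) :=
      Real.sin_nonneg_of_nonneg_of_le_pi (by linarith) (by linarith)
    have h2 : 0 ≤ Real.cos ((x + π / K) / 2) :=
      Real.cos_nonneg_of_neg_pi_div_two_le_of_le (by linarith) (by linarith)
    have := mul_nonneg h1 h2
    linarith
  have key : -(1 / Real.sin (π / K)) ≤
      sInf ((fun y => ∑ k ∈ Finset.range K, Real.cos (y - 2 * x * k)) '' Set.Ico 0 (2 * π)) := by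
    apply le_csInf
    · exact ⟨_, 0, ⟨le_refl _, by linarith⟩, rfl⟩
    · rintro _ ⟨y, -, rfl⟩
      have ht := tele_aux K x y
      have h1 := Real.neg_one_le_sin (y + x)
      have h2 := Real.sin_le_one (y + x - 2 * x * K)
      simp only
      set S := ∑ k ∈ Finset.range K, Real.cos (y - 2 * x * k)
      have h3 : -1 ≤ Real.sin x * S := by linarith
      have h4 : -S ≤ 1 / Real.sin x := by
        rw [le_div_iff₀ (by linarith)]; linarith
      have h5 := one_div_le_one_div_of_le hs hsx
      linarith
  unfold lossOmega
  have h6 : 1 / (K * Real.sin (π / K)) = (1 / (K : ℝ)) * (1 / Real.sin (π / K)) := by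
    field_simp
  rw [h6, neg_mul, ← mul_neg]
  exact mul_le_mul_of_nonneg_left (by linarith) (by positivity)
end

section
/- For every real x with x = qπ for some integer q, L(x) = 1; and for every real x not of the form qπ (q ∈ ℤ), L(x) = sqrt(c1²·f1(x)² + c2²·f2(x)²) / (c1·K). -/
open Real

/-- `J(x,y) = Σ_{k=0}^{K−1} (b + a·k·T)·cos(y − 2xk)`. -/
noncomputable def Jfun (K : ℕ) (T b a x y : ℝ) : ℝ :=
  ∑ k ∈ Finset.range K, (b + a * k * T) * Real.cos (y - 2 * x * k)

/-- The loss function `L(x) = −inf_{y ∈ [0,2π)} J(x,y)/(c1·K)`, with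
`c1 = b + a·T·(K−1)/2`. -/
noncomputable def Lfun (K : ℕ) (T b a x : ℝ) : ℝ :=
  -sInf ((fun y => Jfun K T b a x y) '' Set.Ico 0 (2 * π)) /
    ((b + a * T * ((K : ℝ) - 1) / 2) * K)

/-- `f1(x) = sin(Kx)/sin(x)`. -/
noncomputable def f1 (K : ℕ) (x : ℝ) : ℝ := Real.sin (K * x) / Real.sin x

/-- `f2(x) = K·cos(Kx)/sin(x) − sin(Kx)·cos(x)/sin(x)²`. -/
noncomputable def f2 (K : ℕ) (x : ℝ) : ℝ :=
  (K : ℝ) * Real.cos (K * x) / Real.sin x -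
    Real.sin (K * x) * Real.cos x / (Real.sin x) ^ 2

lemma aux_S0 (K : ℕ) (x y : ℝ) :
    (∑ k ∈ Finset.range K, Real.cos (y - 2 * x * k)) * Real.sin x
      = Real.sin (K * x) * Real.cos (y - (K - 1) * x) := by
  induction K with
  | zero => simp
  | succ n ih =>
    rw [Finset.sum_range_succ, add_mul, ih]
    have e1 : y - ((n : ℝ) - 1) * x = (y - n * x) + x := by ring
    have e2 : y - (((n + 1 : ℕ) : ℝ) - 1) * x = y - n * x := by push_cast; ring
    have e3 : y - 2 * x * n = (y - n * x) - n * x := by ring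
    have e4 : ((n + 1 : ℕ) : ℝ) * x = n * x + x := by push_cast; ring
    rw [e1, e2, e3, e4]
    generalize y - n * x = u
    generalize (n : ℝ) * x = A
    rw [Real.cos_add, Real.cos_sub, Real.sin_add]
    ring

lemma aux_S1 (K : ℕ) (x y : ℝ) :
    2 * (∑ k ∈ Finset.range K, (k : ℝ) * Real.cos (y - 2 * x * k)) * Real.sin x ^ 2
      = (K - 1) * Real.sin (K * x) * Real.sin x * Real.cos (y - (K - 1) * x)
        - (K * Real.cos (K * x) * Real.sin x - Real.sin (K * x) * Real.cos x)
          * Real.sin (y - (K - 1) * x) := by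
  induction K with
  | zero => simp
  | succ n ih =>
    rw [Finset.sum_range_succ, mul_add, add_mul, ih]
    have e1 : y - ((n : ℝ) - 1) * x = (y - n * x) + x := by ring
    have e2 : y - (((n + 1 : ℕ) : ℝ) - 1) * x = y - n * x := by push_cast; ring
    have e3 : y - 2 * x * n = (y - n * x) - n * x := by ring
    have e4 : ((n + 1 : ℕ) : ℝ) * x = n * x + x := by push_cast; ring
    rw [e1, e2, e3, e4]
    generalize y - n * x = u
    generalize (n : ℝ) * x = A
    rw [Real.cos_add, Real.cos_sub, Real.sin_add, Real.sin_add, Real.cos_add]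
    push_cast
    have h := Real.sin_sq_add_cos_sq x
    have h' : Real.cos x ^ 2 = 1 - Real.sin x ^ 2 := by linarith
    ring_nf

lemma aux_J (K : ℕ) (T b a x y : ℝ) (hx : Real.sin x ≠ 0) :
    Jfun K T b a x y = (b + a * T * ((K : ℝ) - 1) / 2) * f1 K x * Real.cos (y - (K - 1) * x)
      + (-(a * T / 2 * f2 K x)) * Real.sin (y - (K - 1) * x) := by
  have h0 := aux_S0 K x y
  have h1 := aux_S1 K x y
  have hJ : Jfun K T b a x y = b * (∑ k ∈ Finset.range K, Real.cos (y - 2 * x * k))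
      + a * T * (∑ k ∈ Finset.range K, (k : ℝ) * Real.cos (y - 2 * x * k)) := by
    unfold Jfun
    rw [Finset.mul_sum, Finset.mul_sum, ← Finset.sum_add_distrib]
    exact Finset.sum_congr rfl fun k _ => by ring
  rw [hJ]
  unfold f1 f2
  generalize (∑ k ∈ Finset.range K, Real.cos (y - 2 * x * k)) = S0 at *
  generalize (∑ k ∈ Finset.range K, (k : ℝ) * Real.cos (y - 2 * x * k)) = S1 at *
  field_simp
  linear_combination 2 * b * Real.sin x * h0 + a * T * h1

lemma aux_inf_s4 (A B t : ℝ) :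
    sInf ((fun y => A * Real.cos (y - t) + B * Real.sin (y - t)) '' Set.Ico 0 (2 * π))
      = - Real.sqrt (A ^ 2 + B ^ 2) := by
  apply IsLeast.csInf_eq
  constructor
  · let z : ℂ := ⟨A, B⟩
    have hz : ‖z‖ = Real.sqrt (A ^ 2 + B ^ 2) := by
      rw [Complex.norm_def, Complex.normSq_apply]; simp only [z]; ring_nf
    have hA : ‖z‖ * Real.cos z.arg = A := Complex.norm_mul_cos_arg z
    have hB : ‖z‖ * Real.sin z.arg = B := Complex.norm_mul_sin_arg z
    set w := t + z.arg + π with hw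
    refine ⟨toIcoMod Real.two_pi_pos 0 w, ?_, ?_⟩
    · simpa using toIcoMod_mem_Ico Real.two_pi_pos 0 w
    · have e : toIcoMod Real.two_pi_pos 0 w - t
          = (z.arg + π) - (toIcoDiv Real.two_pi_pos 0 w : ℤ) * (2 * π) := by
        rw [toIcoMod, zsmul_eq_mul, hw]; ring
      simp only [e]
      rw [Real.cos_sub_int_mul_two_pi, Real.sin_sub_int_mul_two_pi, Real.cos_add_pi,
        Real.sin_add_pi, ← hz]
      have := Real.sin_sq_add_cos_sq z.arg
      linear_combination Real.cos z.arg * hA + Real.sin z.arg * hB - ‖z‖ * this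
  · rintro _ ⟨y, _, rfl⟩
    have h := Real.sin_sq_add_cos_sq (y - t)
    have : |A * Real.cos (y - t) + B * Real.sin (y - t)| ≤ Real.sqrt (A ^ 2 + B ^ 2) := by
      apply Real.abs_le_sqrt
      nlinarith [sq_nonneg (A * Real.sin (y - t) - B * Real.cos (y - t))]
    exact (abs_le.mp this).1

theorem stmt_4 (K : ℕ) (hK : 2 ≤ K) (T b a : ℝ) (hT : 0 < T) (hb : 0 < b)
    (hpos : ∀ k, k < K → 0 < b + a * k * T) (x : ℝ) :
    ((∃ q : ℤ, x = q * π) → Lfun K T b a x = 1) ∧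
    ((¬ ∃ q : ℤ, x = q * π) →
      Lfun K T b a x =
        Real.sqrt ((b + a * T * ((K : ℝ) - 1) / 2) ^ 2 * (f1 K x) ^ 2 +
            (a * T / 2) ^ 2 * (f2 K x) ^ 2) /
          ((b + a * T * ((K : ℝ) - 1) / 2) * K)) := by
  have hsum : ∑ k ∈ Finset.range K, (b + a * (k : ℝ) * T)
      = (b + a * T * ((K : ℝ) - 1) / 2) * K := by
    clear hpos hK
    induction K with
    | zero => simp
    | succ n ih => rw [Finset.sum_range_succ, ih]; push_cast; ring
  have hc : 0 < (b + a * T * ((K : ℝ) - 1) / 2) * K := by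
    rw [← hsum]
    exact Finset.sum_pos (fun k hk => hpos k (Finset.mem_range.mp hk)) ⟨0, by simp; omega⟩
  constructor
  · rintro ⟨q, rfl⟩
    have hJ : (fun y => Jfun K T b a (q * π) y) = fun y =>
        ((b + a * T * ((K : ℝ) - 1) / 2) * K) * Real.cos (y - 0) + 0 * Real.sin (y - 0) := by
      funext y
      rw [← hsum, Finset.sum_mul, zero_mul, add_zero, sub_zero]
      refine Finset.sum_congr rfl fun k _ => ?_
      have e : y - 2 * ((q : ℝ) * π) * k = y - ((q * k : ℤ) : ℝ) * (2 * π) := by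
        push_cast; ring
      rw [e, Real.cos_sub_int_mul_two_pi]
    unfold Lfun
    rw [hJ, aux_inf_s4, neg_neg]
    rw [show ∀ c : ℝ, c ^ 2 + 0 ^ 2 = c ^ 2 from fun c => by ring, Real.sqrt_sq hc.le,
      div_self hc.ne']
  · intro hx
    have hs : Real.sin x ≠ 0 := by
      intro h
      obtain ⟨n, hn⟩ := Real.sin_eq_zero_iff.mp h
      exact hx ⟨n, hn.symm⟩
    unfold Lfun
    rw [funext fun y => aux_J K T b a x y hs, aux_inf_s4, neg_neg]
    congr 2
    ring
end

section
/- The loss function L is periodic with period π (L(x + π) = L(x) for all real x) and symmetric around π/2 (L(π/2 + x) = L(π/2 − x) for all real x). -/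
open Real

theorem L_aux_image (K : ℕ) (T b a x : ℝ) :
    (fun y => Jfun K T b a x y) '' Set.Ico 0 (2 * π) = Set.range (fun y => Jfun K T b a x y) := by
  have hp : Function.Periodic (fun y => Jfun K T b a x y) (2 * π) := by
    intro y
    simp only [Jfun]
    refine Finset.sum_congr rfl fun k _ => ?_
    rw [show y + 2 * π - 2 * x * k = (y - 2 * x * k) + 2 * π by ring, Real.cos_add_two_pi]
  apply Set.Subset.antisymm (Set.image_subset_range _ _)
  rintro _ ⟨y, rfl⟩
  obtain ⟨z, hz, h⟩ := hp.exists_mem_Ico₀ Real.two_pi_pos y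
  exact ⟨z, hz, h.symm⟩

theorem L_aux_period (K : ℕ) (T b a x : ℝ) : Lfun K T b a (x + π) = Lfun K T b a x := by
  have h : ∀ y, Jfun K T b a (x + π) y = Jfun K T b a x y := by
    intro y
    simp only [Jfun]
    refine Finset.sum_congr rfl fun k _ => ?_
    rw [show y - 2 * (x + π) * k = (y - 2 * x * k) - k * (2 * π) by ring,
      Real.cos_sub_nat_mul_two_pi]
  simp only [Lfun, h]

theorem L_aux_even (K : ℕ) (T b a x : ℝ) : Lfun K T b a (-x) = Lfun K T b a x := by
  have h : ∀ y, Jfun K T b a (-x) y = Jfun K T b a x (-y) := by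
    intro y
    simp only [Jfun]
    refine Finset.sum_congr rfl fun k _ => ?_
    rw [← Real.cos_neg, show -(y - 2 * -x * k) = -y - 2 * x * k by ring]
  have hr : Set.range (fun y => Jfun K T b a (-x) y) = Set.range (fun y => Jfun K T b a x y) := by
    ext z
    constructor
    · rintro ⟨y, rfl⟩
      exact ⟨-y, (h y).symm⟩
    · rintro ⟨y, rfl⟩
      exact ⟨-y, by simp [h]⟩
  simp only [Lfun, L_aux_image, hr]

theorem stmt_5 (K : ℕ) (hK : 2 ≤ K) (T b a : ℝ) (hT : 0 < T) (hb : 0 < b)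
    (hpos : ∀ k, k < K → 0 < b + a * k * T) :
    (∀ x : ℝ, Lfun K T b a (x + π) = Lfun K T b a x) ∧
    (∀ x : ℝ, Lfun K T b a (π / 2 + x) = Lfun K T b a (π / 2 - x)) := by
  refine ⟨fun x => L_aux_period K T b a x, fun x => ?_⟩
  rw [← L_aux_even, ← L_aux_period, show -(π / 2 + x) + π = π / 2 - x by ring]
end

section
/- For every real x, L(x) ≤ 1; moreover, if a ≠ 0 then 0 < L(x) for every real x, and if a = 0 then 0 ≤ L(x) for every real x. -/
open Real

lemma J_tele (n : ℕ) (T b a x y : ℝ) :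
    ∑ k ∈ Finset.range (n+1), (b + a * k * T) * (Real.cos (y - 2 * x * k) - Real.cos (y - 2 * x * (k+1)))
     = b * Real.cos y + ∑ k ∈ Finset.range n, a * T * Real.cos (y - 2 * x * (k+1))
       - (b + a * n * T) * Real.cos (y - 2 * x * (n+1)) := by
  induction n with
  | zero => simp; ring
  | succ n ih =>
    rw [Finset.sum_range_succ, ih, Finset.sum_range_succ]
    push_cast
    ring

lemma J_shift (n : ℕ) (T b a x y : ℝ) :
    Jfun (n+1) T b a x y - Jfun (n+1) T b a x (y - 2 * x) =
     b * Real.cos y + ∑ k ∈ Finset.range n, a * T * Real.cos (y - 2 * x * (k+1))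
       - (b + a * n * T) * Real.cos (y - 2 * x * (n+1)) := by
  rw [← J_tele]
  unfold Jfun
  rw [← Finset.sum_sub_distrib]
  refine Finset.sum_congr rfl fun k _ => ?_
  rw [mul_sub]
  congr 3
  ring

lemma sum_cos_one (n : ℕ) (f : ℕ → ℝ) (c : ℝ) (hc : 0 < c)
    (h : c * n ≤ ∑ k ∈ Finset.range n, c * Real.cos (f k)) (j : ℕ) (hj : j < n) :
    Real.cos (f j) = 1 := by
  by_contra hne
  have h1 : Real.cos (f j) < 1 := lt_of_le_of_ne (Real.cos_le_one _) hne
  have : ∑ k ∈ Finset.range n, c * Real.cos (f k) < ∑ k ∈ Finset.range n, c := by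
    apply Finset.sum_lt_sum
    · intro i _
      nlinarith [Real.cos_le_one (f i)]
    · exact ⟨j, Finset.mem_range.2 hj, by nlinarith⟩
  simp at this
  linarith

lemma cos_one_of_J_zero (n : ℕ) (hn : 1 ≤ n) (T b a x : ℝ) (hT : 0 < T) (hb : 0 < b)
    (hw : 0 < b + a * n * T) (ha : a ≠ 0) (h : ∀ y, Jfun (n+1) T b a x y = 0) :
    Real.cos (2 * x) = 1 := by
  rcases lt_or_gt_of_ne ha with ha | ha
  · have e := J_shift n T b a x 0
    rw [h, h, Real.cos_zero] at e
    have hs : ∑ k ∈ Finset.range n, a * T * Real.cos (0 - 2 * x * (k+1)) =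
        - ∑ k ∈ Finset.range n, (-a * T) * Real.cos (0 - 2 * x * (k+1)) := by
      rw [← Finset.sum_neg_distrib]
      exact Finset.sum_congr rfl fun k _ => by ring
    rw [hs] at e
    have := sum_cos_one n (fun k => 0 - 2 * x * (k+1)) (-a * T) (by nlinarith)
      (by nlinarith [Real.neg_one_le_cos (0 - 2 * x * (n+1)), Real.cos_le_one (0 - 2 * x * (n+1))]) 0 (by omega)
    simpa using this
  · have e := J_shift n T b a x (2 * x * (n+1))
    rw [h, h, sub_self (2 * x * (n+1)), Real.cos_zero] at e
    have := sum_cos_one n (fun k => 2 * x * (n+1) - 2 * x * (k+1)) (a * T) (by positivity)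
      (by nlinarith [Real.cos_le_one (2 * x * (n+1))]) (n-1) (by omega)
    rw [← this]
    congr 1
    push_cast [hn]
    ring

lemma sum_w (K : ℕ) (T b a : ℝ) :
    ∑ k ∈ Finset.range K, (b + a * k * T) = (b + a * T * ((K : ℝ) - 1) / 2) * K := by
  induction K with
  | zero => simp
  | succ n ih => rw [Finset.sum_range_succ, ih]; push_cast; ring

lemma J_pi (K : ℕ) (T b a x y : ℝ) : Jfun K T b a x (y + π) = - Jfun K T b a x y := by
  unfold Jfun
  rw [← Finset.sum_neg_distrib]
  refine Finset.sum_congr rfl fun k _ => ?_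
  rw [show y + π - 2 * x * k = (y - 2 * x * k) + π by ring, Real.cos_add_pi]
  ring

lemma J_periodic (K : ℕ) (T b a x : ℝ) : Function.Periodic (Jfun K T b a x) (2 * π) := by
  intro y
  rw [show y + 2 * π = (y + π) + π by ring, J_pi, J_pi, neg_neg]

theorem stmt_6 (K : ℕ) (hK : 2 ≤ K) (T b a : ℝ) (hT : 0 < T) (hb : 0 < b)
    (hpos : ∀ k, k < K → 0 < b + a * k * T) :
    (∀ x : ℝ, Lfun K T b a x ≤ 1) ∧
    (a ≠ 0 → ∀ x : ℝ, 0 < Lfun K T b a x) ∧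
    (a = 0 → ∀ x : ℝ, 0 ≤ Lfun K T b a x) := by
  have hsum : 0 < ∑ k ∈ Finset.range K, (b + a * k * T) :=
    Finset.sum_pos (fun k hk => hpos k (Finset.mem_range.1 hk)) ⟨0, Finset.mem_range.2 (by omega)⟩
  have hD := hsum
  rw [sum_w] at hD
  have hlow : ∀ x y, -((b + a * T * ((K : ℝ) - 1) / 2) * K) ≤ Jfun K T b a x y := by
    intro x y
    rw [← sum_w, ← Finset.sum_neg_distrib]
    refine Finset.sum_le_sum fun k hk => ?_
    nlinarith [hpos k (Finset.mem_range.1 hk), Real.neg_one_le_cos (y - 2 * x * k)]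
  have hbdd : ∀ x, BddBelow ((fun y => Jfun K T b a x y) '' Set.Ico 0 (2 * π)) := by
    intro x
    refine ⟨-((b + a * T * ((K : ℝ) - 1) / 2) * K), ?_⟩
    rintro _ ⟨y, _, rfl⟩
    exact hlow x y
  have hle : ∀ x y, sInf ((fun y => Jfun K T b a x y) '' Set.Ico 0 (2 * π)) ≤ Jfun K T b a x y := by
    intro x y
    obtain ⟨z, hz, e⟩ := (J_periodic K T b a x).exists_mem_Ico₀ Real.two_pi_pos y
    rw [e]
    exact csInf_le (hbdd x) ⟨z, hz, rfl⟩
  refine ⟨fun x => ?_, fun ha x => ?_, fun _ x => ?_⟩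
  · unfold Lfun
    rw [div_le_one hD, neg_le]
    refine le_csInf ⟨_, 0, ⟨le_rfl, Real.two_pi_pos⟩, rfl⟩ ?_
    rintro _ ⟨y, _, rfl⟩
    exact hlow x y
  · have hex : ∃ y, Jfun K T b a x y ≠ 0 := by
      by_contra! h
      obtain ⟨n, rfl⟩ : ∃ n, K = n + 1 := ⟨K - 1, by omega⟩
      have hc := cos_one_of_J_zero n (by omega) T b a x hT hb (hpos n (by omega)) ha h
      obtain ⟨m, hm⟩ := (Real.cos_eq_one_iff _).1 hc
      have h0 := h 0
      have : Jfun (n+1) T b a x 0 = ∑ k ∈ Finset.range (n+1), (b + a * k * T) := by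
        unfold Jfun
        refine Finset.sum_congr rfl fun k _ => ?_
        have : Real.cos (0 - 2 * x * k) = 1 := by
          rw [Real.cos_eq_one_iff]
          refine ⟨-(m * k), ?_⟩
          rw [← hm]
          push_cast
          ring
        rw [this, mul_one]
      linarith
    obtain ⟨y, hy⟩ := hex
    unfold Lfun
    apply div_pos _ hD
    have h1 := hle x y
    have h2 := hle x (y + π)
    rw [J_pi] at h2
    rcases lt_or_gt_of_ne hy with h | h <;> linarith
  · unfold Lfun
    apply div_nonneg _ hD.le
    have h1 := hle x 0
    have h2 := hle x (0 + π)
    rw [J_pi] at h2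
    linarith
end

section
/- For every real x not of the form qπ (q ∈ ℤ), the loss function is bounded as |f1(x)|/K ≤ L(x) ≤ sqrt((K−1)²·f1(x)² + f2(x)²) / (K·(K−1)). -/
open Real

theorem J_aux (T b a x y : ℝ) (n : ℕ) :
    Jfun n T b a x y * (Real.sin x) ^ 2 =
      (b + a * T * ((n : ℝ) - 1) / 2) * Real.cos (y - n * x + x) * Real.sin (n * x) * Real.sin x
      - (a * T / 2) * Real.sin (y - n * x + x) *
        (n * Real.cos (n * x) * Real.sin x - Real.sin (n * x) * Real.cos x) := by
  induction n with
  | zero => simp [Jfun]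
  | succ n ih =>
    have h1 : Jfun (n + 1) T b a x y =
        Jfun n T b a x y + (b + a * n * T) * Real.cos (y - 2 * x * n) := by
      simp [Jfun, Finset.sum_range_succ]
    have e1 : y - 2 * x * n = (y - n * x) - n * x := by ring
    have e2 : y - ((n + 1 : ℕ) : ℝ) * x + x = y - n * x := by push_cast; ring
    have e3 : ((n + 1 : ℕ) : ℝ) * x = n * x + x := by push_cast; ring
    rw [h1, add_mul, ih, e2, e3, e1]
    generalize y - n * x = p
    simp only [Real.sin_add, Real.cos_add, Real.cos_sub]
    push_cast
    ring

theorem J_eq (T b a x y : ℝ) (n : ℕ) (hs : Real.sin x ≠ 0) :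
    Jfun n T b a x y =
      (b + a * T * ((n : ℝ) - 1) / 2) * f1 n x * Real.cos (y - n * x + x)
      - (a * T / 2) * f2 n x * Real.sin (y - n * x + x) := by
  have h := J_aux T b a x y n
  have h2 : Real.sin x ^ 2 ≠ 0 := pow_ne_zero _ hs
  apply mul_right_cancel₀ h2
  rw [h]
  unfold f1 f2
  field_simp

theorem J_per (T b a x y : ℝ) (n : ℕ) (m : ℤ) :
    Jfun n T b a x (y - m * (2 * π)) = Jfun n T b a x y := by
  unfold Jfun
  apply Finset.sum_congr rfl
  intro k _
  rw [show y - m * (2 * π) - 2 * x * k = (y - 2 * x * k) - m * (2 * π) by ring,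
    Real.cos_sub_int_mul_two_pi]

theorem J_lower (A B p : ℝ) : -Real.sqrt (A ^ 2 + B ^ 2) ≤ A * Real.cos p - B * Real.sin p := by
  have h : |A * Real.cos p - B * Real.sin p| ≤ Real.sqrt (A ^ 2 + B ^ 2) := by
    apply Real.abs_le_sqrt
    have := Real.sin_sq_add_cos_sq p
    nlinarith [sq_nonneg (A * Real.sin p + B * Real.cos p)]
  exact (abs_le.mp h).1

theorem stmt_8 (K : ℕ) (hK : 2 ≤ K) (T b a : ℝ) (hT : 0 < T) (hb : 0 < b)
    (hpos : ∀ k, k < K → 0 < b + a * k * T) (x : ℝ)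
    (hx : ¬ ∃ q : ℤ, x = q * π) :
    |f1 K x| / K ≤ Lfun K T b a x ∧
    Lfun K T b a x ≤
      Real.sqrt (((K : ℝ) - 1) ^ 2 * (f1 K x) ^ 2 + (f2 K x) ^ 2) /
        ((K : ℝ) * ((K : ℝ) - 1)) := by
  have hs : Real.sin x ≠ 0 := by
    intro h
    obtain ⟨q, hq⟩ := Real.sin_eq_zero_iff.mp h
    exact hx ⟨q, hq.symm⟩
  have hK2 : (2 : ℝ) ≤ K := by exact_mod_cast hK
  have hKm : (0 : ℝ) < (K : ℝ) - 1 := by linarith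
  have hlast : 0 < b + a * ((K : ℝ) - 1) * T := by
    have := hpos (K - 1) (by omega)
    rwa [Nat.cast_sub (by omega), Nat.cast_one] at this
  have hlow := fun y => J_lower ((b + a * T * ((K : ℝ) - 1) / 2) * f1 K x)
    ((a * T / 2) * f2 K x) (y - K * x + x)
  simp only [← J_eq T b a x _ K hs] at hlow
  have hJ := fun y => J_eq T b a x y K hs
  have hc : 0 < b + a * T * ((K : ℝ) - 1) / 2 := by nlinarith
  unfold Lfun
  have hd : (a * T / 2 * ((K : ℝ) - 1)) ^ 2 ≤ (b + a * T * ((K : ℝ) - 1) / 2) ^ 2 := by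
    apply sq_le_sq'
    · nlinarith
    · nlinarith
  generalize hcc : b + a * T * ((K : ℝ) - 1) / 2 = c at *
  have hmem : ∀ y, Jfun K T b a x y ∈ (fun y => Jfun K T b a x y) '' Set.Ico 0 (2 * π) := by
    intro y
    have h0 := toIcoMod_mem_Ico Real.two_pi_pos 0 y
    rw [zero_add] at h0
    refine ⟨_, h0, ?_⟩
    have := J_per T b a x y K (toIcoDiv Real.two_pi_pos 0 y)
    rw [← zsmul_eq_mul] at this
    exact this
  have hbdd : BddBelow ((fun y => Jfun K T b a x y) '' Set.Ico 0 (2 * π)) := by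
    refine ⟨-√((c * f1 K x) ^ 2 + (a * T / 2 * f2 K x) ^ 2), ?_⟩
    rintro _ ⟨y, _, rfl⟩
    exact hlow y
  have hKpos : (0 : ℝ) < K := by linarith
  constructor
  · have h1 : sInf ((fun y => Jfun K T b a x y) '' Set.Ico 0 (2 * π)) ≤ -(c * |f1 K x|) := by
      rcases le_total 0 (f1 K x) with h | h
      · refine (csInf_le hbdd (hmem (π + K * x - x))).trans ?_
        rw [hJ, abs_of_nonneg h]
        rw [show π + K * x - x - K * x + x = π by ring]
        simp
      · refine (csInf_le hbdd (hmem (K * x - x))).trans ?_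
        rw [hJ, abs_of_nonpos h]
        rw [show K * x - x - K * x + x = 0 by ring]
        simp
    rw [div_le_div_iff₀ hKpos (by positivity)]
    nlinarith
  · have h1 := le_csInf ⟨_, hmem 0⟩ (a := -√((c * f1 K x) ^ 2 + (a * T / 2 * f2 K x) ^ 2))
      (by rintro _ ⟨y, _, rfl⟩; exact hlow y)
    have h2 : √((c * f1 K x) ^ 2 + (a * T / 2 * f2 K x) ^ 2) * ((K : ℝ) - 1) ≤
        c * √(((K : ℝ) - 1) ^ 2 * (f1 K x) ^ 2 + (f2 K x) ^ 2) := by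
      refine (le_abs_self _).trans (abs_le_of_sq_le_sq ?_ (by positivity))
      rw [mul_pow, mul_pow c (√_), Real.sq_sqrt (by positivity), Real.sq_sqrt (by positivity)]
      nlinarith [mul_le_mul_of_nonneg_right hd (sq_nonneg (f2 K x))]
    rw [div_le_div_iff₀ (by positivity) (by positivity)]
    have h3 := mul_le_mul_of_nonneg_right (neg_le_neg h1) hKm.le
    rw [neg_neg] at h3
    have h4 := mul_le_mul_of_nonneg_right (h3.trans h2) hKpos.le
    linarith
end

section
/- For all real x and y: if x = qπ for some integer q, then J(x,y) = c1·K·cos(y); and if x is not of the form qπ (q ∈ ℤ), then J(x,y) = c1·f1(x)·cos(y − (K−1)x) − c2·f2(x)·sin(y − (K−1)x). -/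
open Real

lemma aux14 (T b a x y : ℝ) (K : ℕ) :
    (∑ k ∈ Finset.range K, (b + a * k * T) * Real.cos (y - 2 * x * k)) * Real.sin x ^ 2 =
      (b + a * T * ((K : ℝ) - 1) / 2) * (Real.sin (K * x) * Real.sin x)
          * Real.cos (y - ((K : ℝ) - 1) * x) -
        (a * T / 2) * (K * Real.cos (K * x) * Real.sin x - Real.sin (K * x) * Real.cos x)
          * Real.sin (y - ((K : ℝ) - 1) * x) := by
  induction K with
  | zero => simp
  | succ K ih =>
    rw [Finset.sum_range_succ, add_mul, ih]
    have e1 : y - ((K : ℝ) - 1) * x = (y - K * x) + x := by ring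
    have e2 : y - (((K + 1 : ℕ) : ℝ) - 1) * x = y - K * x := by push_cast; ring
    have e3 : ((K + 1 : ℕ) : ℝ) * x = K * x + x := by push_cast; ring
    have e4 : y - 2 * x * K = (y - K * x) - K * x := by ring
    rw [e1, e2, e3, e4]
    push_cast
    generalize y - K * x = z
    generalize (K : ℝ) * x = w
    simp only [Real.cos_add, Real.sin_add, Real.cos_sub]
    have h := Real.sin_sq_add_cos_sq x
    generalize Real.sin x = s at *
    generalize Real.cos x = c at *
    generalize Real.sin z = sz
    generalize Real.cos z = cz
    generalize Real.sin w = sw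
    generalize Real.cos w = cw
    clear ih e1 e2 e3 e4
    grind

theorem stmt_14 (K : ℕ) (hK : 2 ≤ K) (T b a : ℝ) (hT : 0 < T) (hb : 0 < b)
    (x y : ℝ) :
    ((∃ q : ℤ, x = q * π) →
      Jfun K T b a x y = (b + a * T * ((K : ℝ) - 1) / 2) * K * Real.cos y) ∧
    ((¬ ∃ q : ℤ, x = q * π) →
      Jfun K T b a x y =
        (b + a * T * ((K : ℝ) - 1) / 2) * f1 K x * Real.cos (y - ((K : ℝ) - 1) * x) -
          (a * T / 2) * f2 K x * Real.sin (y - ((K : ℝ) - 1) * x)) := by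
  constructor
  · rintro ⟨q, rfl⟩
    have h : ∀ k : ℕ, Real.cos (y - 2 * (q * π) * k) = Real.cos y := by
      intro k
      have := Real.cos_sub_int_mul_two_pi y (q * k)
      rw [← this]
      push_cast
      congr 1
      ring
    unfold Jfun
    simp only [h]
    clear hK
    induction K with
    | zero => simp
    | succ K ih =>
      rw [Finset.sum_range_succ, ih]
      push_cast
      ring
  · intro hx
    have hs : Real.sin x ≠ 0 := by
      intro h0
      obtain ⟨n, hn⟩ := Real.sin_eq_zero_iff.mp h0
      exact hx ⟨n, hn.symm⟩
    have h := aux14 T b a x y K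
    unfold Jfun f1 f2
    rw [← mul_left_inj' (pow_ne_zero 2 hs), h]
    field_simp
end
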